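/- arXiv:1811.04429 — 3 statements merged into one kernel-verified Lean document; each statement's English description precedes it below -/
import Mathlib

section
/- Let G be a finite simple chordal graph and let B be an induced complete bipartite subgraph of G with parts B_X = {x} and B_Y = {y_1,...,y_k}. Then the sets M_1(B_X) and M_1(B_Y) are disjoint and nonadjacent (no vertex of M_1(B_X) is equal or adjacent to a vertex of M_1(B_Y)). -/
open SimpleGraph

/-- `N₁(S)`: the set of vertices at distance exactly 1 from the vertex set `S`. -/
def nOne {V : Type*} (G : SimpleGraph V) (S : Set V) : Set V :=
  {v | v ∉ S ∧ ∃ s ∈ S, G.Adj v s}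

/-- `N₂(S)`: the set of vertices at distance exactly 2 from the vertex set `S`. -/
def nTwo {V : Type*} (G : SimpleGraph V) (S : Set V) : Set V :=
  {v | v ∉ S ∧ (∀ s ∈ S, ¬ G.Adj v s) ∧ ∃ u, G.Adj v u ∧ ∃ s ∈ S, G.Adj u s}

/-- A graph is chordal if every induced cycle is a triangle, i.e. it has no
induced cycle of length at least 4. -/
def IsChordal {V : Type*} (G : SimpleGraph V) : Prop :=
  ∀ n : ℕ, 4 ≤ n → ∀ s : Set V, IsEmpty (G.induce s ≃g cycleGraph n)

/-- A set of vertices is independent if its elements are pairwise nonadjacent. -/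
def IsIndepSet {V : Type*} (G : SimpleGraph V) (S : Set V) : Prop :=
  S.Pairwise fun a b => ¬ G.Adj a b

/-- `B` is an induced complete bipartite subgraph of `G` with parts `B_X = {x}` and
`B_Y = Y`: `Y` is a nonempty independent set not containing `x`, and `x` is adjacent
to every vertex of `Y`. -/
def IsInducedStar {V : Type*} (G : SimpleGraph V) (x : V) (Y : Set V) : Prop :=
  Y.Nonempty ∧ x ∉ Y ∧ (∀ y ∈ Y, G.Adj x y) ∧ ∀ y₁ ∈ Y, ∀ y₂ ∈ Y, ¬ G.Adj y₁ y₂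

/-- `M₁(B_X) = N₁(B_X) ∩ N₂(B_Y)` where `B_X = {x}` and `B_Y = Y`. -/
def M1X {V : Type*} (G : SimpleGraph V) (x : V) (Y : Set V) : Set V :=
  nOne G {x} ∩ nTwo G Y

/-- `M₁(B_Y) = N₁(B_Y) ∩ N₂(B_X)`. -/
def M1Y {V : Type*} (G : SimpleGraph V) (x : V) (Y : Set V) : Set V :=
  nOne G Y ∩ nTwo G {x}

/-- `M₂(B_X) = N₁(M₁(B_X)) ∩ N₂(B_X)`. -/
def M2X {V : Type*} (G : SimpleGraph V) (x : V) (Y : Set V) : Set V :=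
  nOne G (M1X G x Y) ∩ nTwo G {x}

/-- `M₂(B_Y) = N₁(M₁(B_Y)) ∩ N₂(B_Y)`. -/
def M2Y {V : Type*} (G : SimpleGraph V) (x : V) (Y : Set V) : Set V :=
  nOne G (M1Y G x Y) ∩ nTwo G Y

/-- `M₁(B) = M₁(B_X) ∪ M₁(B_Y)`. -/
def M1B {V : Type*} (G : SimpleGraph V) (x : V) (Y : Set V) : Set V :=
  M1X G x Y ∪ M1Y G x Y

/-- `M₂(B) = M₂(B_X) ∪ M₂(B_Y)`. -/
def M2B {V : Type*} (G : SimpleGraph V) (x : V) (Y : Set V) : Set V :=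
  M2X G x Y ∪ M2Y G x Y

section

variable {V : Type*} {G : SimpleGraph V}

theorem IsChordal.not_cycleGraph_isIndContained (hG : IsChordal G) {n : ℕ} (hn : 4 ≤ n) :
    ¬ cycleGraph n ⊴ G := by
  rw [isIndContained_iff_exists_iso_induce]
  rintro ⟨s, ⟨e⟩⟩
  exact (hG n hn s).false e.symm

theorem cycleGraph_four_isIndContained {a b c d : V}
    (hab : G.Adj a b) (hbc : G.Adj b c) (hcd : G.Adj c d) (hda : G.Adj d a)
    (hac : a ≠ c) (hbd : b ≠ d) (hac' : ¬ G.Adj a c) (hbd' : ¬ G.Adj b d) :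
    cycleGraph 4 ⊴ G := by
  have injective : Function.Injective ![a, b, c, d] := by
    intro i j hij
    fin_cases i <;> fin_cases j <;>
      simp_all [hab.ne, hbc.ne, hcd.ne, hda.ne, hab.ne', hbc.ne', hcd.ne', hda.ne']
  have cycleGraph_four_adj : ∀ i j, (cycleGraph 4).Adj i j ↔ j = i + 1 ∨ i = j + 1 := by
    decide
  have adj_iff (i j : Fin 4) :
      G.Adj (![a, b, c, d] i) (![a, b, c, d] j) ↔ (cycleGraph 4).Adj i j := by
    rw [cycleGraph_four_adj]
    fin_cases i <;> fin_cases j <;>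
      simp [hab, hab.symm, hbc, hbc.symm, hcd, hcd.symm, hda, hda.symm, hac', hbd',
        G.adj_comm c a, G.adj_comm d b]
  exact ⟨⟨⟨_, injective⟩, adj_iff _ _⟩⟩

theorem disjoint_nOne_nTwo {S : Set V} : Disjoint (nOne G S) (nTwo G S) := by
  rw [Set.disjoint_left]
  rintro v ⟨-, s, hs, hvs⟩ ⟨-, hv, -⟩
  exact hv s hs hvs

theorem stmt1_general (hG : ¬ cycleGraph 4 ⊴ G) {X Y : Set V}
    (hXY : ∀ x ∈ X, ∀ y ∈ Y, G.Adj x y) :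
    Disjoint (nOne G X ∩ nTwo G Y) (nOne G Y ∩ nTwo G X) ∧
      ∀ a ∈ nOne G X ∩ nTwo G Y, ∀ b ∈ nOne G Y ∩ nTwo G X, ¬ G.Adj a b := by
  refine ⟨disjoint_nOne_nTwo.mono Set.inter_subset_left Set.inter_subset_right, ?_⟩
  rintro a ⟨⟨-, x, hx, hax⟩, haY, haY', -⟩ b ⟨⟨-, y, hy, hby⟩, hbX, hbX', -⟩ hab
  have hay : a ≠ y := (ne_of_mem_of_not_mem hy haY).symm
  have hxb : x ≠ b := ne_of_mem_of_not_mem hx hbX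
  have hxb' : ¬ G.Adj x b := fun h ↦ hbX' x hx h.symm
  exact hG <| cycleGraph_four_isIndContained hax (hXY x hx y hy) hby.symm hab.symm
    hay hxb (haY' y hy) hxb'

end

/-- `M₁(B_X)` and `M₁(B_Y)` are disjoint and nonadjacent. -/
theorem stmt1 {V : Type*} (G : SimpleGraph V) (hG : IsChordal G)
    (x : V) (Y : Set V) (hB : IsInducedStar G x Y) :
    Disjoint (M1X G x Y) (M1Y G x Y) ∧
      ∀ a ∈ M1X G x Y, ∀ b ∈ M1Y G x Y, ¬ G.Adj a b :=
  stmt1_general (hG.not_cycleGraph_isIndContained le_rfl) fun _ hs y hy ↦ hs ▸ hB.2.2.1 y hy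
end

section
/- Let G be a finite simple chordal graph and let B be an induced complete bipartite subgraph of G with parts B_X = {x} and B_Y = {y_1,...,y_k}. Then the sets M_2(B_X) and M_2(B_Y) are disjoint and nonadjacent. -/
open SimpleGraph

/-!
In a chordal graph every edge `xy` of a cycle lies in a triangle whose third vertex is on the
cycle: a shortest way around from `x` to `y` inside the cycle closes up with `xy` to a chordless
cycle, which must be a triangle. Hence, for every edge `xy`, a walk from a neighbour of `x` to a
neighbour of `y` meets `N[x] ∩ N[y]`.

For `a ∈ M₂(B_X)` and `b ∈ M₂(B_Y)` choose paths `x, u, a` and `y, w, b` with `u ∈ N₂(B_Y)`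
and `w ∈ N₂(B_X)`. If `a = b` or `a` is adjacent to `b`, then `u, a, b, w` is such a walk, but
`u, b ∈ N₂(B_Y)` are outside `N[y]` and `w, a ∈ N₂(B_X)` are outside `N[x]`.
-/

section Geodesic

variable {V : Type*} {G : SimpleGraph V} {u v : V}

theorem dist_getVert_of_length_eq_dist {p : G.Walk u v} (hp : p.length = G.dist u v) {i : ℕ}
    (hi : i ≤ p.length) : G.dist u (p.getVert i) = i := by
  rw [← length_eq_dist_of_subwalk hp (p.isSubwalk_take i), Walk.take_length, min_eq_left hi]

theorem adj_getVert_iff_of_length_eq_dist {p : G.Walk u v} (hp : p.length = G.dist u v) {i j : ℕ}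
    (hi : i ≤ p.length) (hj : j ≤ p.length) :
    G.Adj (p.getVert i) (p.getVert j) ↔ i + 1 = j ∨ j + 1 = i := by
  constructor
  · intro hadj
    have hne : i ≠ j := fun h ↦ hadj.ne (congrArg p.getVert h)
    have hdist := hadj.diff_dist_adj (u := u)
    rw [dist_getVert_of_length_eq_dist hp hi, dist_getVert_of_length_eq_dist hp hj] at hdist
    lia
  · rintro (rfl | rfl)
    · exact p.adj_getVert_succ hj
    · exact (p.adj_getVert_succ hi).symm

theorem exists_pathGraph_embedding_of_reachable (h : G.Reachable u v) :
    ∃ f : pathGraph (G.dist u v + 1) ↪g G, f 0 = u ∧ f (Fin.last _) = v := by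
  obtain ⟨p, hp⟩ := h.exists_walk_length_eq_dist
  rw [← hp]
  have hinj : Function.Injective fun i : Fin (p.length + 1) ↦ p.getVert i := fun i j hij ↦ by
    have hdist := congrArg (G.dist u) hij
    rwa [dist_getVert_of_length_eq_dist hp i.is_le, dist_getVert_of_length_eq_dist hp j.is_le,
      Fin.val_inj] at hdist
  exact ⟨⟨⟨_, hinj⟩, fun {i j} ↦
    (adj_getVert_iff_of_length_eq_dist hp i.is_le j.is_le).trans pathGraph_adj.symm⟩,
    p.getVert_zero, p.getVert_length⟩

end Geodesic

section ClosingEdge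

variable {V W : Type*} {G : SimpleGraph V} {H : SimpleGraph W}

theorem cycleGraph_eq_pathGraph_sup_edge (n : ℕ) :
    cycleGraph (n + 2) = pathGraph (n + 2) ⊔ edge 0 (Fin.last (n + 1)) := by
  ext i j
  rw [cycleGraph_adj', sup_adj, pathGraph_adj, edge_adj]
  simp only [Fin.ext_iff, Fin.val_last, Fin.val_zero, ne_eq]
  rcases lt_trichotomy i j with h | rfl | h
  · have hij := Fin.coe_sub_iff_lt.2 h
    have hji := Fin.coe_sub_iff_le.2 h.le
    lia
  · simp
  · have hij := Fin.coe_sub_iff_le.2 h.le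
    have hji := Fin.coe_sub_iff_lt.2 h
    lia

theorem nonempty_embedding_sup_edge (f : H ↪g G) (a b : W) :
    Nonempty (H ⊔ edge a b ↪g G ⊔ edge (f a) (f b)) :=
  ⟨f.toEmbedding, by simp [edge_adj]⟩

theorem deleteEdges_sup_edge {x y : V} (hxy : G.Adj x y) :
    G.deleteEdges {s(x, y)} ⊔ edge x y = G := by
  ext a b
  have hne := hxy.ne
  have hyx := hxy.symm
  simp only [sup_adj, deleteEdges_adj, edge_adj, Set.mem_singleton_iff, Sym2.eq_iff]
  grind

end ClosingEdge

theorem isChordal_iff_isEmpty_embedding {V : Type*} {G : SimpleGraph V} :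
    IsChordal G ↔ ∀ n, 4 ≤ n → IsEmpty (cycleGraph n ↪g G) := by
  refine forall₂_congr fun n _ ↦ ⟨fun h ↦ ⟨fun f ↦ ?_⟩, fun h s ↦ ⟨fun e ↦ ?_⟩⟩
  · exact (h (Set.range f)).false f.isoInduceRange.symm
  · exact h.false ((Embedding.induce s).comp e.symm.toEmbedding)

namespace IsChordal

variable {V : Type*} {G : SimpleGraph V} {x y : V}

theorem induce (hG : IsChordal G) (s : Set V) : IsChordal (G.induce s) :=
  isChordal_iff_isEmpty_embedding.2 fun n hn ↦
    ⟨fun f ↦ (isChordal_iff_isEmpty_embedding.1 hG n hn).false ((Embedding.induce s).comp f)⟩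

theorem edist_deleteEdges_le_two_of_not_isBridge (hG : IsChordal G) (hxy : G.Adj x y)
    (hbridge : ¬ G.IsBridge s(x, y)) : (G.deleteEdges {s(x, y)}).edist x y ≤ 2 := by
  rw [isBridge_iff, not_not] at hbridge
  by_contra! hlt
  rw [← hbridge.coe_dist_eq_edist, Nat.ofNat_lt_cast] at hlt
  obtain ⟨n, hn⟩ := Nat.exists_eq_add_of_lt hlt
  have hpath := exists_pathGraph_embedding_of_reachable hbridge
  rw [hn] at hpath
  obtain ⟨f, hfx, hfy⟩ := hpath
  obtain ⟨g⟩ := nonempty_embedding_sup_edge f 0 (Fin.last _)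
  rw [hfx, hfy, deleteEdges_sup_edge hxy, ← cycleGraph_eq_pathGraph_sup_edge] at g
  exact (isChordal_iff_isEmpty_embedding.1 hG _ (by lia)).false g

theorem commonNeighbors_nonempty_of_not_isBridge (hG : IsChordal G) (hxy : G.Adj x y)
    (hbridge : ¬ G.IsBridge s(x, y)) : (G.commonNeighbors x y).Nonempty := by
  have hle := hG.edist_deleteEdges_le_two_of_not_isBridge hxy hbridge
  by_contra! hempty
  refine hle.not_gt (two_lt_edist_iff.2 ⟨hxy.ne, by simp, ?_⟩)
  refine Set.subset_eq_empty (fun z hz ↦ ?_) hempty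
  exact ⟨deleteEdges_le _ hz.1, deleteEdges_le _ hz.2⟩

theorem exists_mem_support_commonNeighbors (hG : IsChordal G) (hxy : G.Adj x y)
    (p : G.Walk x y) (hp : s(x, y) ∉ p.edges) : ∃ z ∈ p.support, z ∈ G.commonNeighbors x y := by
  let q := p.induce {z | z ∈ p.support} fun _ ↦ id
  have hq : q.edges.map (Sym2.map Subtype.val) = p.edges :=
    (q.edges_map (Embedding.induce _).toHom).symm.trans (congrArg Walk.edges (p.map_induce _))
  have hbridge : ¬ (G.induce {z | z ∈ p.support}).IsBridge
      s(⟨x, p.start_mem_support⟩, ⟨y, p.end_mem_support⟩) := fun h ↦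
    hp <| hq ▸ List.mem_map_of_mem (isBridge_iff_forall_walk_mem_edges.1 h q)
  obtain ⟨z, hxz, hyz⟩ :=
    (hG.induce _).commonNeighbors_nonempty_of_not_isBridge (induce_adj.2 hxy) hbridge
  exact ⟨z, z.2, hxz, hyz⟩

theorem exists_mem_support_insert_neighborSet_inter (hG : IsChordal G) {u w : V}
    (hxy : G.Adj x y) (hxu : G.Adj x u) (hwy : G.Adj w y) (p : G.Walk u w) :
    ∃ z ∈ p.support, z ∈ insert x (G.neighborSet x) ∩ insert y (G.neighborSet y) := by
  by_cases hx : x ∈ p.support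
  · exact ⟨x, hx, .inl rfl, .inr hxy.symm⟩
  by_cases hy : y ∈ p.support
  · exact ⟨y, hy, .inr hxy, .inl rfl⟩
  have huy : u ≠ y := fun h ↦ hy (h ▸ p.start_mem_support)
  have hwx : w ≠ x := fun h ↦ hx (h ▸ p.end_mem_support)
  have hedge : s(x, y) ∉ (Walk.cons hxu (p.concat hwy)).edges := by
    have hp : s(x, y) ∉ p.edges := fun h ↦ hx (p.fst_mem_support_of_mem_edges h)
    simp [Walk.edges_concat, hp, huy.symm, hwx.symm, hxy.ne, hxy.ne']
  obtain ⟨z, hz, hxz, hyz⟩ := hG.exists_mem_support_commonNeighbors hxy _ hedge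
  have hzp : z ∈ p.support := by
    simpa [Walk.support_concat, hxz.ne', hyz.ne'] using hz
  exact ⟨z, hzp, .inr hxz, .inr hyz⟩

end IsChordal

/-- The set `N₁(N₁(X) ∩ N₂(Y)) ∩ N₂(X)`, defined for arbitrary `X` and `Y` so that
`M₂(B_X)` and `M₂(B_Y)` are the instances `M2 G {x} Y` and `M2 G Y {x}` of one construction. -/
def M2 {V : Type*} (G : SimpleGraph V) (X Y : Set V) : Set V :=
  nOne G (nOne G X ∩ nTwo G Y) ∩ nTwo G X

section SecondLayer

variable {V : Type*} {G : SimpleGraph V} {X Y : Set V} {a b : V}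

theorem notMem_insert_neighborSet_of_mem_nTwo {x v : V} (hv : v ∈ nTwo G X) (hx : x ∈ X) :
    v ∉ insert x (G.neighborSet x) := by
  rintro (rfl | hadj)
  · exact hv.1 hx
  · exact hv.2.1 x hx hadj.symm

theorem exists_adj_adj_of_mem_M2 (ha : a ∈ M2 G X Y) :
    ∃ x ∈ X, ∃ u ∈ nTwo G Y, G.Adj x u ∧ G.Adj u a := by
  obtain ⟨⟨-, u, ⟨⟨-, x, hx, hux⟩, hu⟩, hau⟩, -⟩ := ha
  exact ⟨x, hx, u, hu, hux.symm, hau.symm⟩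

theorem IsChordal.exists_mem_support_notMem_nTwo_of_mem_M2 (hG : IsChordal G)
    (hXY : G.IsCompleteBetween X Y) (ha : a ∈ M2 G X Y) (hb : b ∈ M2 G Y X)
    (p : G.Walk a b) : ∃ z ∈ p.support, z ∉ nTwo G X ∧ z ∉ nTwo G Y := by
  obtain ⟨x, hx, u, hu, hxu, hua⟩ := exists_adj_adj_of_mem_M2 ha
  obtain ⟨y, hy, w, hw, hyw, hwb⟩ := exists_adj_adj_of_mem_M2 hb
  obtain ⟨z, hz, hzx, hzy⟩ := hG.exists_mem_support_insert_neighborSet_inter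
    (hXY hx hy) hxu hyw.symm (.cons hua (p.concat hwb.symm))
  have hzX : z ∉ nTwo G X := fun h ↦ notMem_insert_neighborSet_of_mem_nTwo h hx hzx
  have hzY : z ∉ nTwo G Y := fun h ↦ notMem_insert_neighborSet_of_mem_nTwo h hy hzy
  have hzu : z ≠ u := fun h ↦ hzY (h ▸ hu)
  have hzw : z ≠ w := fun h ↦ hzX (h ▸ hw)
  exact ⟨z, by simpa [Walk.support_concat, hzu, hzw] using hz, hzX, hzY⟩

theorem stmt2_general (hG : IsChordal G) (hXY : G.IsCompleteBetween X Y) :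
    Disjoint (M2 G X Y) (M2 G Y X) ∧ ∀ a ∈ M2 G X Y, ∀ b ∈ M2 G Y X, ¬ G.Adj a b := by
  refine ⟨Set.disjoint_left.2 fun a ha hb ↦ ?_, fun a ha b hb hab ↦ ?_⟩
  · obtain ⟨z, hz, hzX, -⟩ := hG.exists_mem_support_notMem_nTwo_of_mem_M2 hXY ha hb .nil
    rw [Walk.mem_support_nil_iff] at hz
    exact hzX (hz ▸ ha.2)
  · obtain ⟨z, hz, hzX, hzY⟩ := hG.exists_mem_support_notMem_nTwo_of_mem_M2 hXY ha hb hab.toWalk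
    simp only [Adj.support_toWalk, List.mem_cons, List.not_mem_nil, or_false] at hz
    rcases hz with rfl | rfl
    · exact hzX ha.2
    · exact hzY hb.2

end SecondLayer

/-- `M₂(B_X)` and `M₂(B_Y)` are disjoint and nonadjacent. -/
theorem stmt2 {V : Type*} (G : SimpleGraph V) (hG : IsChordal G)
    (x : V) (Y : Set V) (hB : IsInducedStar G x Y) :
    Disjoint (M2X G x Y) (M2Y G x Y) ∧
      ∀ a ∈ M2X G x Y, ∀ b ∈ M2Y G x Y, ¬ G.Adj a b := by
  exact stmt2_general hG (by rintro _ rfl; exact hB.2.2.1)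
end

section
/- Let G be a finite simple chordal graph and let B be an induced complete bipartite subgraph of G with parts B_X = {x} and B_Y = {y_1,...,y_k}. If w_1 and w_2 are two adjacent vertices in M_2(B_X) ∪ M_2(B_Y), then f(w_1) ⊆ f(w_2) or f(w_2) ⊆ f(w_1). -/
open SimpleGraph

/-- `f(S) = N₁(S) ∩ M₁(B)`. -/
def fSet {V : Type*} (G : SimpleGraph V) (x : V) (Y : Set V) (S : Set V) : Set V :=
  nOne G S ∩ M1B G x Y

/-! Let `C` be a connected vertex set and `w₁ ∼ w₂` two vertices without neighbours in `C`. If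
`z₁` is adjacent to `w₁` but not to `w₂`, `z₂` to `w₂` but not to `w₁`, and both have neighbours
in `C`, then `C ∪ {z₁, z₂, w₂}` is connected and `z₁`, `w₂` are the only neighbours of `w₁` in it.
A shortest path from `z₁` to `w₂` inside that set has length at least two, so closing it up
through `w₁` gives an induced cycle of length at least four. The theorem is the case where `C` is
the vertex set of `B`; that `w₁` and `w₂` have no neighbours in `B` is again an instance of closing
up a path. -/

section InducedCycle

variable {V : Type*} {G : SimpleGraph V} {u v : V}

/-- A shortest walk, regarded as an induced path, to be closed up to an induced cycle. -/
def pathGraphEmbeddingOfShortestWalk (p : G.Walk u v) (hp : p.length = G.dist u v) :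
    pathGraph (p.length + 1) ↪g G where
  toFun i := p.getVert i
  inj' i j hij := by
    have hdist : G.dist u (p.getVert i) = G.dist u (p.getVert j) := congrArg (G.dist u) hij
    rw [dist_getVert_of_length_eq_dist hp (Nat.lt_succ_iff.mp i.isLt),
      dist_getVert_of_length_eq_dist hp (Nat.lt_succ_iff.mp j.isLt)] at hdist
    exact Fin.ext hdist
  map_rel_iff' {i j} :=
    (adj_getVert_iff_of_length_eq_dist hp (Nat.lt_succ_iff.mp i.isLt)
      (Nat.lt_succ_iff.mp j.isLt)).trans pathGraph_adj.symm

theorem cycleGraph_adj_succ_succ {n : ℕ} {i j : Fin n} :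
    (cycleGraph (n + 1)).Adj i.succ j.succ ↔ (pathGraph n).Adj i j := by
  rw [cycleGraph_adj', pathGraph_adj]
  simp only [← Nat.cast_inj (R := ℤ), Fin.coe_int_sub_eq_ite, Fin.val_succ, Fin.le_def]
  split_ifs <;> lia

theorem cycleGraph_adj_zero_succ {n : ℕ} {i : Fin (n + 1)} :
    (cycleGraph (n + 2)).Adj 0 i.succ ↔ i = 0 ∨ i = Fin.last n := by
  rw [cycleGraph_adj', Fin.ext_iff, Fin.ext_iff, Fin.val_zero, Fin.val_last]
  simp only [← Nat.cast_inj (R := ℤ), Fin.coe_int_sub_eq_ite, Fin.val_succ, Fin.le_def,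
    Fin.val_zero]
  split_ifs <;> lia

/-- The induced cycle obtained from an induced path by joining its two ends through a further
vertex `w`, which becomes vertex `0` of the cycle. In a chordal graph this is possible only for
`n ≤ 1`. -/
def cycleGraphEmbeddingOfPath {n : ℕ} (e : pathGraph (n + 1) ↪g G) (w : V) (hw : w ∉ Set.range e)
    (hadj : ∀ i, G.Adj w (e i) ↔ i = 0 ∨ i = Fin.last n) : cycleGraph (n + 2) ↪g G where
  toFun := Fin.cons w e
  inj' := Fin.cons_injective_iff.mpr ⟨hw, e.injective⟩
  map_rel_iff' {i j} := by
    change G.Adj (Fin.cons (α := fun _ => V) w e i) (Fin.cons (α := fun _ => V) w e j) ↔ _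
    cases i using Fin.cases with
    | zero =>
      cases j using Fin.cases with
      | zero => simp only [SimpleGraph.irrefl]
      | succ j => rw [Fin.cons_zero, Fin.cons_succ, hadj, cycleGraph_adj_zero_succ]
    | succ i =>
      cases j using Fin.cases with
      | zero =>
        rw [Fin.cons_zero, Fin.cons_succ, G.adj_comm, hadj, adj_comm, cycleGraph_adj_zero_succ]
      | succ j => rw [Fin.cons_succ, Fin.cons_succ, e.map_adj_iff, cycleGraph_adj_succ_succ]

end InducedCycle

namespace IsChordal

variable {V : Type*} {G : SimpleGraph V}

theorem isEmpty_cycleGraph_embedding (hG : IsChordal G) {n : ℕ} (hn : 4 ≤ n) :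
    IsEmpty (cycleGraph n ↪g G) :=
  ⟨fun e => (hG n hn _).false e.isoInduceRange.symm⟩

theorem adj_of_forall_mem_adj_iff (hG : IsChordal G) {S : Set V}
    (hS : (G.induce S).Preconnected) {w a b : V} (hw : w ∉ S) (ha : a ∈ S) (hb : b ∈ S)
    (hab : a ≠ b) (hN : ∀ v ∈ S, G.Adj w v ↔ v = a ∨ v = b) : G.Adj a b := by
  by_contra hnadj
  have hreach := hS ⟨a, ha⟩ ⟨b, hb⟩
  obtain ⟨p, hp⟩ := hreach.exists_walk_length_eq_dist
  have hlen : 1 < p.length :=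
    hp ▸ hreach.one_lt_dist_of_ne_of_not_adj (Subtype.coe_ne_coe.mp hab) hnadj
  let e : pathGraph (p.length + 1) ↪g G :=
    (Embedding.induce S).comp (pathGraphEmbeddingOfShortestWalk p hp)
  have he_mem (i) : e i ∈ S := (p.getVert i).property
  have he_zero : e 0 = a := congrArg Subtype.val p.getVert_zero
  have he_last : e (Fin.last p.length) = b := congrArg Subtype.val p.getVert_length
  have hadj (i) : G.Adj w (e i) ↔ i = 0 ∨ i = Fin.last p.length := by
    rw [hN _ (he_mem i), ← e.injective.eq_iff, ← e.injective.eq_iff (b := Fin.last _), he_zero,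
      he_last]
  have hw_range : w ∉ Set.range e := fun ⟨i, hi⟩ => hw (hi ▸ he_mem i)
  exact (hG.isEmpty_cycleGraph_embedding (by lia)).false
    (cycleGraphEmbeddingOfPath e w hw_range hadj)

end IsChordal

section Neighborhoods

variable {V : Type*} {G : SimpleGraph V}

theorem mem_nOne_singleton {v w : V} : v ∈ nOne G {w} ↔ G.Adj v w := by
  simp only [nOne, Set.mem_ofPred_eq, Set.mem_singleton_iff, exists_eq_left, and_iff_right_iff_imp]
  exact fun h => h.ne

theorem IsChordal.nOne_inter_nOne_subset_or (hG : IsChordal G) {C : Set V}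
    (hC : (G.induce C).Preconnected) {w₁ w₂ : V} (hw₁ : ∀ c ∈ C, ¬ G.Adj w₁ c)
    (hw₂ : ∀ c ∈ C, ¬ G.Adj w₂ c) (hadj : G.Adj w₁ w₂) :
    nOne G {w₁} ∩ nOne G C ⊆ nOne G {w₂} ∨ nOne G {w₂} ∩ nOne G C ⊆ nOne G {w₁} := by
  by_contra! hcon
  simp only [Set.not_subset, Set.mem_inter_iff, mem_nOne_singleton] at hcon
  obtain ⟨⟨z₁, ⟨hz₁w₁, -, c₁, hc₁, hzc₁⟩, hz₁w₂⟩, z₂, ⟨hz₂w₂, -, c₂, hc₂, hzc₂⟩, hz₂w₁⟩ := hcon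
  have hconn : (G.induce (({z₁} ∪ C) ∪ {z₂, w₂})).Connected :=
    connected_induce_union
      (connected_induce_union .of_subsingleton hC (Set.mem_singleton z₁) hc₁ hzc₁).preconnected
      (induce_pair_connected_of_adj hz₂w₂).preconnected (Or.inr hc₂) (Or.inl rfl) hzc₂.symm
  have hw₁C : w₁ ∉ C := fun h => hw₂ w₁ h hadj.symm
  have hz₁_ne : z₁ ≠ w₂ := fun h => hw₂ c₁ hc₁ (h ▸ hzc₁)
  have hz₂_ne : w₁ ≠ z₂ := fun h => hw₁ c₂ hc₂ (h ▸ hzc₂)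
  refine hz₁w₂ (hG.adj_of_forall_mem_adj_iff hconn.preconnected (w := w₁) ?_ (by simp) (by simp)
    hz₁_ne ?_)
  · simp [hw₁C, hz₁w₁.ne', hadj.ne, hz₂_ne]
  · rintro v ((rfl | hv) | rfl | rfl)
    · simp [hz₁w₁.symm]
    · refine iff_of_false (hw₁ v hv) ?_
      rintro (rfl | rfl)
      · exact hw₁ _ hv hz₁w₁.symm
      · exact hw₁ _ hv hadj
    · refine iff_of_false (fun h => hz₂w₁ h.symm) ?_
      rintro (rfl | rfl)
      · exact hz₂w₁ hz₁w₁
      · exact hz₂w₂.ne rfl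
    · simp [hadj]

end Neighborhoods

section Layers

variable {V : Type*} {G : SimpleGraph V} {X Y : Set V}

/-- The vertices at distance one from `X` and two from `Y`. This treats both halves of `M₁(B)` at
once: for the star with parts `{x}` and `Y`, `M₁(B_X)` is `firstLayer G {x} Y` and `M₁(B_Y)` is
`firstLayer G Y {x}`. -/
def firstLayer (G : SimpleGraph V) (X Y : Set V) : Set V :=
  nOne G X ∩ nTwo G Y

/-- The vertices at distance two from `X` and one from `firstLayer G X Y`. This treats both halves
of `M₂(B)` at once: for the star with parts `{x}` and `Y`, `M₂(B_X)` is `secondLayer G {x} Y` and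
`M₂(B_Y)` is `secondLayer G Y {x}`. -/
def secondLayer (G : SimpleGraph V) (X Y : Set V) : Set V :=
  nOne G (firstLayer G X Y) ∩ nTwo G X

theorem firstLayer_subset_nOne_union : firstLayer G X Y ⊆ nOne G (X ∪ Y) := by
  rintro z ⟨⟨hzX, x, hx, hzx⟩, hzY, -⟩
  exact ⟨not_or_intro hzX hzY, x, Or.inl hx, hzx⟩

theorem nonempty_of_mem_secondLayer {w : V} (hw : w ∈ secondLayer G X Y) :
    X.Nonempty ∧ Y.Nonempty := by
  obtain ⟨⟨-, -, ⟨⟨-, x, hx, -⟩, -, -, -, -, y, hy, -⟩, -⟩, -⟩ := hw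
  exact ⟨⟨x, hx⟩, ⟨y, hy⟩⟩

theorem IsChordal.not_adj_of_mem_secondLayer (hG : IsChordal G) (hXY : G.IsCompleteBetween X Y)
    {w : V} (hw : w ∈ secondLayer G X Y) : ∀ v ∈ X ∪ Y, ¬ G.Adj w v := by
  obtain ⟨⟨-, z, ⟨⟨-, x, hx, hzx⟩, hzY, hz_not_adj, -⟩, hwz⟩, hwX, hw_not_adj, -⟩ := hw
  rintro y (hy | hy) hwy
  · exact hw_not_adj y hy hwy
  have hconn := (Walk.cons hzx (hXY hx hy).toWalk).connected_induce_support
  refine hz_not_adj y hy (hG.adj_of_forall_mem_adj_iff hconn.preconnected (w := w) ?_ (by simp)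
    (by simp) (fun h => hzY (h ▸ hy)) ?_)
  · have hwx : w ≠ x := fun h => hwX (h ▸ hx)
    simp [hwz.ne, hwx, hwy.ne]
  · simp [hwz, hwy, hw_not_adj x hx, hzx.ne', (hXY hx hy).ne]

theorem preconnected_induce_union_of_isCompleteBetween (hXY : G.IsCompleteBetween X Y)
    (hX : X.Nonempty) (hY : Y.Nonempty) : (G.induce (X ∪ Y)).Preconnected := by
  obtain ⟨x, hx⟩ := hX
  obtain ⟨y, hy⟩ := hY
  have hxy : (G.induce (X ∪ Y)).Adj ⟨x, Or.inl hx⟩ ⟨y, Or.inr hy⟩ := hXY hx hy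
  refine (connected_iff_exists_forall_reachable _ |>.mpr ⟨⟨y, Or.inr hy⟩, ?_⟩).preconnected
  rintro ⟨v, hv | hv⟩
  · exact Adj.reachable (induce_adj.mpr (hXY hv hy).symm)
  · exact hxy.symm.reachable.trans (Adj.reachable (induce_adj.mpr (hXY hx hv)))

end Layers

theorem stmt6_general {V : Type*} {G : SimpleGraph V} (hG : IsChordal G) {X Y : Set V}
    (hXY : G.IsCompleteBetween X Y) {w₁ w₂ : V}
    (hw₁ : w₁ ∈ secondLayer G X Y ∪ secondLayer G Y X)
    (hw₂ : w₂ ∈ secondLayer G X Y ∪ secondLayer G Y X) (hadj : G.Adj w₁ w₂) :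
    nOne G {w₁} ∩ (firstLayer G X Y ∪ firstLayer G Y X) ⊆
        nOne G {w₂} ∩ (firstLayer G X Y ∪ firstLayer G Y X) ∨
      nOne G {w₂} ∩ (firstLayer G X Y ∪ firstLayer G Y X) ⊆
        nOne G {w₁} ∩ (firstLayer G X Y ∪ firstLayer G Y X) := by
  have hnonempty : X.Nonempty ∧ Y.Nonempty :=
    hw₁.elim nonempty_of_mem_secondLayer fun h => (nonempty_of_mem_secondLayer h).symm
  have hconn := preconnected_induce_union_of_isCompleteBetween hXY hnonempty.1 hnonempty.2
  have hfar {w} (hw : w ∈ secondLayer G X Y ∪ secondLayer G Y X) : ∀ v ∈ X ∪ Y, ¬ G.Adj w v :=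
    hw.elim (hG.not_adj_of_mem_secondLayer hXY)
      (Set.union_comm Y X ▸ hG.not_adj_of_mem_secondLayer hXY.symm)
  have hnear : firstLayer G X Y ∪ firstLayer G Y X ⊆ nOne G (X ∪ Y) :=
    Set.union_subset firstLayer_subset_nOne_union
      (Set.union_comm Y X ▸ firstLayer_subset_nOne_union)
  refine (hG.nOne_inter_nOne_subset_or hconn (hfar hw₁) (hfar hw₂) hadj).imp ?_ ?_ <;>
    exact fun h => Set.subset_inter ((Set.inter_subset_inter_right _ hnear).trans h)
      Set.inter_subset_right

/-- If `w₁` and `w₂` are adjacent vertices of `M₂(B_X) ∪ M₂(B_Y)` then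
`f(w₁) ⊆ f(w₂)` or `f(w₂) ⊆ f(w₁)`. -/
theorem stmt6 {V : Type*} (G : SimpleGraph V) (hG : IsChordal G)
    (x : V) (Y : Set V) (hB : IsInducedStar G x Y)
    (w₁ w₂ : V) (hw₁ : w₁ ∈ M2X G x Y ∪ M2Y G x Y) (hw₂ : w₂ ∈ M2X G x Y ∪ M2Y G x Y)
    (hadj : G.Adj w₁ w₂) :
    fSet G x Y {w₁} ⊆ fSet G x Y {w₂} ∨ fSet G x Y {w₂} ⊆ fSet G x Y {w₁} := by
  have hxY : G.IsCompleteBetween {x} Y :=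
    fun _ hv y hy => Set.mem_singleton_iff.mp hv ▸ hB.2.2.1 y hy
  exact stmt6_general hG hxY hw₁ hw₂ hadj
end
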